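/- If V is a positive random variable with continuous density such that for every t > 0 there is a(t) > 0 with the exponential tilt V_t (density ∝ e^{-tv} f_V(v)) equal in distribution to a(t)·V, then V has a Gamma distribution. -/

import Mathlib

open Real MeasureTheory

/-!
Comparing densities, the hypothesis becomes `f (g t * v) = k * (exp (-(t * v)) * f v)` for `v > 0`,
where `g t = (a t)⁻¹` and `k` depends on `t` only. Tilting by `s` and then by `t` has to agree with
tilting in the other order, which gives `s + t * g s = t + s * g t`; hence `g t = 1 + c * t` for a
constant `c`, and positivity of `g` together with continuity of `f` forces `c > 0`. Now
`exp (v / c) * f v` is multiplied by a constant under each dilation `v ↦ l * v` with `l > 1`, so it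
is a constant times a power of `v`. Integrability at `0` and total mass one fix the remaining
parameters.
-/

theorem exists_eq_rpow_of_map_mul {m : ℝ → ℝ} (hcont : ContinuousOn m (Set.Ioi 0)) (hone : m 1 = 1)
    (hmul : ∀ x y, 0 < x → 0 < y → m (x * y) = m x * m y) :
    ∃ q : ℝ, ∀ x, 0 < x → m x = x ^ q := by
  have hpos (x : ℝ) (hx : 0 < x) : 0 < m x := by
    have hsq : m x = m √x * m √x := by
      rw [← hmul _ _ (sqrt_pos.2 hx) (sqrt_pos.2 hx), mul_self_sqrt hx.le]
    have hinv : m x * m x⁻¹ = 1 := by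
      rw [← hmul _ _ hx (inv_pos.2 hx), mul_inv_cancel₀ hx.ne', hone]
    exact (hsq ▸ mul_self_nonneg _).lt_of_ne' (left_ne_zero_of_mul_eq_one hinv)
  let L : ℝ →+ ℝ := AddMonoidHom.mk' (fun x ↦ log (m (exp x))) fun x y ↦ by
    rw [exp_add, hmul _ _ (exp_pos x) (exp_pos y),
      log_mul (hpos _ (exp_pos x)).ne' (hpos _ (exp_pos y)).ne']
  have hL : Continuous L :=
    (hcont.comp_continuous continuous_exp exp_pos).log fun x ↦ (hpos _ (exp_pos x)).ne'
  refine ⟨L 1, fun x hx ↦ ?_⟩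
  have hlog : log (m x) = log x * L 1 := by
    simpa [L, exp_log hx] using map_real_smul L hL (log x) 1
  rw [rpow_def_of_pos hx, ← hlog, exp_log (hpos x hx)]

theorem map_mul_mul_map_one_of_dilation {h : ℝ → ℝ}
    (hdil : ∀ l, 1 < l → ∃ k, ∀ v, 0 < v → h (l * v) = k * h v) {x y : ℝ} (hx : 0 < x)
    (hy : 0 < y) : h (x * y) * h 1 = h x * h y := by
  rcases lt_trichotomy x 1 with hlt | rfl | hgt
  · obtain ⟨k, hk⟩ := hdil x⁻¹ ((one_lt_inv₀ hx).2 hlt)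
    have hone : h 1 = k * h x := by rw [← hk x hx, inv_mul_cancel₀ hx.ne']
    have hy' : h y = k * h (x * y) := by rw [← hk _ (mul_pos hx hy), inv_mul_cancel_left₀ hx.ne']
    rw [hone, hy']
    ring
  · rw [one_mul, mul_comm]
  · obtain ⟨k, hk⟩ := hdil x hgt
    have hx' : h x = k * h 1 := by rw [← hk 1 one_pos, mul_one]
    rw [hk y hy, hx']
    ring

theorem exists_eq_mul_rpow_of_dilation {h : ℝ → ℝ} (hcont : ContinuousOn h (Set.Ioi 0))
    (hdil : ∀ l, 1 < l → ∃ k, ∀ v, 0 < v → h (l * v) = k * h v) :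
    ∃ q : ℝ, ∀ v, 0 < v → h v = h 1 * v ^ q := by
  by_cases h1 : h 1 = 0
  · refine ⟨0, fun v hv ↦ ?_⟩
    have hsq := map_mul_mul_map_one_of_dilation hdil hv hv
    simpa [h1] using hsq
  · obtain ⟨q, hq⟩ := exists_eq_rpow_of_map_mul (hcont.div_const (h 1)) (div_self h1)
      fun x y hx hy ↦ by
        field_simp
        exact map_mul_mul_map_one_of_dilation hdil hx hy
    exact ⟨q, fun v hv ↦ by rw [← hq v hv, mul_div_cancel₀ _ h1]⟩

/-- The pointwise form of being closed under exponential tilting up to scale: on `(0, ∞)`, the tilt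
`exp (-(t * v)) * f v` is proportional to the dilation `f (g t * v)`. The factor `g t` is the
reciprocal of the scale by which the random variable is multiplied. -/
structure IsTiltDilation (f g : ℝ → ℝ) : Prop where
  pos : ∀ t, 0 < t → 0 < g t
  exists_mul_eq : ∀ t, 0 < t → ∃ k, ∀ v, 0 < v → f (g t * v) = k * (exp (-(t * v)) * f v)

namespace IsTiltDilation

variable {f g : ℝ → ℝ} {v₀ : ℝ}

theorem exists_ne_zero_mul_eq (hfg : IsTiltDilation f g) (hv₀ : 0 < v₀) (hfv₀ : f v₀ ≠ 0) {t : ℝ}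
    (ht : 0 < t) : ∃ k ≠ 0, ∀ v, 0 < v → f (g t * v) = k * (exp (-(t * v)) * f v) := by
  obtain ⟨k, hk⟩ := hfg.exists_mul_eq t ht
  have hg := hfg.pos t ht
  have hkv₀ := hk (v₀ / g t) (div_pos hv₀ hg)
  rw [mul_div_cancel₀ _ hg.ne'] at hkv₀
  exact ⟨k, left_ne_zero_of_mul (hkv₀ ▸ hfv₀), hk⟩

theorem add_mul_dilation_comm (hfg : IsTiltDilation f g) (hv₀ : 0 < v₀) (hfv₀ : f v₀ ≠ 0)
    {s t : ℝ} (hs : 0 < s) (ht : 0 < t) : s + t * g s = t + s * g t := by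
  obtain ⟨k, hk0, hk⟩ := hfg.exists_ne_zero_mul_eq hv₀ hfv₀ hs
  obtain ⟨l, hl0, hl⟩ := hfg.exists_ne_zero_mul_eq hv₀ hfv₀ ht
  have hst : f (g t * (g s * v₀)) = l * k * f v₀ * exp (-(v₀ * (s + t * g s))) := by
    rw [hl _ (mul_pos (hfg.pos s hs) hv₀), hk v₀ hv₀,
      show -(v₀ * (s + t * g s)) = -(t * (g s * v₀)) + -(s * v₀) by ring, exp_add]
    ring
  have hts : f (g t * (g s * v₀)) = l * k * f v₀ * exp (-(v₀ * (t + s * g t))) := by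
    rw [mul_left_comm, hk _ (mul_pos (hfg.pos t ht) hv₀), hl v₀ hv₀,
      show -(v₀ * (t + s * g t)) = -(s * (g t * v₀)) + -(t * v₀) by ring, exp_add]
    ring
  have hexp := mul_left_cancel₀ (mul_ne_zero (mul_ne_zero hl0 hk0) hfv₀) (hst.symm.trans hts)
  exact mul_left_cancel₀ hv₀.ne' (neg_injective (exp_injective hexp))

theorem dilation_ne_one (hfg : IsTiltDilation f g) (hcont : ContinuousOn f (Set.Ioi 0))
    (hv₀ : 0 < v₀) (hfv₀ : f v₀ ≠ 0) {t : ℝ} (ht : 0 < t) : g t ≠ 1 := by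
  intro hgt
  obtain ⟨k, hk0, hk⟩ := hfg.exists_ne_zero_mul_eq hv₀ hfv₀ ht
  have hexp (v : ℝ) (hv : 0 < v) (hfv : f v ≠ 0) : k * exp (-(t * v)) = 1 := by
    have hkv := hk v hv
    rw [hgt, one_mul, ← mul_assoc] at hkv
    exact (right_eq_mul₀ hfv).1 hkv
  have hnear : ∀ᶠ v in nhdsWithin v₀ (Set.Ioi v₀), f v ≠ 0 :=
    ((hcont.continuousAt (Ioi_mem_nhds hv₀)).eventually_ne hfv₀).filter_mono nhdsWithin_le_nhds
  obtain ⟨v₁, hfv₁, hlt : v₀ < v₁⟩ := (hnear.and self_mem_nhdsWithin).exists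
  have heq := mul_left_cancel₀ hk0
    ((hexp v₀ hv₀ hfv₀).trans (hexp v₁ (hv₀.trans hlt) hfv₁).symm)
  exact hlt.ne (mul_left_cancel₀ ht.ne' (neg_injective (exp_injective heq)))

theorem exists_dilation_eq_one_add_mul (hfg : IsTiltDilation f g)
    (hcont : ContinuousOn f (Set.Ioi 0)) (hv₀ : 0 < v₀) (hfv₀ : f v₀ ≠ 0) :
    ∃ c > 0, ∀ t, 0 < t → g t = 1 + c * t := by
  have haff (t : ℝ) (ht : 0 < t) : g t = 1 + (g 1 - 1) * t := by
    linear_combination -hfg.add_mul_dilation_comm hv₀ hfv₀ one_pos ht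
  refine ⟨g 1 - 1, ?_, haff⟩
  by_contra! hle
  have hneg : g 1 - 1 < 0 :=
    hle.lt_of_ne (sub_ne_zero.2 (hfg.dilation_ne_one hcont hv₀ hfv₀ one_pos))
  have ht : 0 < -(g 1 - 1)⁻¹ := neg_pos.2 (inv_lt_zero.2 hneg)
  have hzero : g (-(g 1 - 1)⁻¹) = 0 := by
    rw [haff _ ht, mul_neg, mul_inv_cancel₀ hneg.ne, add_neg_cancel]
  exact (hfg.pos _ ht).ne' hzero

theorem exists_exp_mul_dilation_eq (hfg : IsTiltDilation f g) {c : ℝ} (hc : 0 < c)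
    (hg : ∀ t, 0 < t → g t = 1 + c * t) {l : ℝ} (hl : 1 < l) :
    ∃ k, ∀ v, 0 < v → exp (c⁻¹ * (l * v)) * f (l * v) = k * (exp (c⁻¹ * v) * f v) := by
  have ht : 0 < (l - 1) / c := div_pos (sub_pos.2 hl) hc
  have hgl : g ((l - 1) / c) = l := by rw [hg _ ht, mul_div_cancel₀ _ hc.ne', add_sub_cancel]
  obtain ⟨k, hk⟩ := hfg.exists_mul_eq _ ht
  refine ⟨k, fun v hv ↦ ?_⟩
  have hkv := hk v hv
  rw [hgl] at hkv
  have hexp : exp (c⁻¹ * v) = exp (c⁻¹ * (l * v)) * exp (-((l - 1) / c * v)) := by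
    rw [← exp_add]
    congr 1
    ring
  rw [hkv, hexp]
  ring

theorem exists_eq_mul_rpow_mul_exp (hfg : IsTiltDilation f g)
    (hcont : ContinuousOn f (Set.Ioi 0)) :
    ∃ C q : ℝ, ∃ b > 0, ∀ v, 0 < v → f v = C * (v ^ q * exp (-(b * v))) := by
  by_cases hzero : ∀ v, 0 < v → f v = 0
  · exact ⟨0, 0, 1, one_pos, fun v hv ↦ by rw [hzero v hv, zero_mul]⟩
  push Not at hzero
  obtain ⟨v₀, hv₀, hfv₀⟩ := hzero
  obtain ⟨c, hc, hg⟩ := hfg.exists_dilation_eq_one_add_mul hcont hv₀ hfv₀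
  obtain ⟨q, hq⟩ := exists_eq_mul_rpow_of_dilation (h := fun v ↦ exp (c⁻¹ * v) * f v)
    (by fun_prop) fun _ hl ↦ hfg.exists_exp_mul_dilation_eq hc hg hl
  refine ⟨exp (c⁻¹ * 1) * f 1, q, c⁻¹, inv_pos.2 hc, fun v hv ↦ ?_⟩
  rw [← mul_assoc, ← hq v hv, mul_right_comm, ← exp_add, add_neg_cancel, exp_zero, one_mul]

end IsTiltDilation

section Densities

open scoped ENNReal

theorem measurable_of_continuousOn_of_eq_zero {X : Type*} [TopologicalSpace X] [MeasurableSpace X]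
    [OpensMeasurableSpace X] {f : X → ℝ} {s : Set X} (hs : MeasurableSet s)
    (hcont : ContinuousOn f s) (hzero : ∀ x ∉ s, f x = 0) : Measurable f := by
  classical
  have hf : f = s.piecewise f 0 := by
    rw [Set.piecewise_eq_indicator, Set.indicator_eq_self.2 (Function.support_subset_iff'.2 hzero)]
  rw [hf]
  exact hcont.measurable_piecewise continuousOn_const hs

theorem map_withDensity_comp {X Y : Type*} [MeasurableSpace X] [MeasurableSpace Y] {μ : Measure X}
    {g : X → Y} {ρ : Y → ℝ≥0∞} (hg : Measurable g) (hρ : Measurable ρ) :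
    (μ.withDensity (ρ ∘ g)).map g = (μ.map g).withDensity ρ := by
  ext s hs
  rw [Measure.map_apply hg hs, withDensity_apply _ (hg hs), withDensity_apply _ hs,
    setLIntegral_map hs hρ hg]
  rfl

theorem map_mul_left_withDensity {ρ : ℝ → ℝ≥0∞} (hρ : Measurable ρ) {c : ℝ} (hc : c ≠ 0) :
    (volume.withDensity ρ).map (c * ·) =
      volume.withDensity fun v ↦ ENNReal.ofReal |c⁻¹| * ρ (c⁻¹ * v) := by
  have hscaled : Measurable fun v ↦ ρ (c⁻¹ * v) := by fun_prop
  have hcomp : ρ = (fun v ↦ ρ (c⁻¹ * v)) ∘ (c * ·) := by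
    ext v
    simp only [Function.comp_apply, inv_mul_cancel_left₀ hc]
  conv_lhs => rw [hcomp]
  rw [map_withDensity_comp (measurable_const_mul c) hscaled, Real.map_volume_mul_left hc,
    withDensity_smul_measure, ← withDensity_smul _ hscaled]
  rfl

theorem eqOn_of_withDensity_eq {X : Type*} [TopologicalSpace X] [MeasurableSpace X]
    {μ : Measure X} [SigmaFinite μ] [μ.IsOpenPosMeasure] {ρ σ : X → ℝ≥0∞} {U : Set X}
    (hρ : AEMeasurable ρ μ) (hσ : AEMeasurable σ μ) (h : μ.withDensity ρ = μ.withDensity σ)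
    (hU : IsOpen U) (hρU : ContinuousOn ρ U) (hσU : ContinuousOn σ U) : Set.EqOn ρ σ U :=
  Measure.eqOn_open_of_ae_eq (ae_restrict_of_ae ((withDensity_eq_iff_of_sigmaFinite hρ hσ).1 h))
    hU hρU hσU

theorem eq_mul_comp_mul_of_withDensity_eq_map_mul_left {f g : ℝ → ℝ} (hf : Measurable f)
    (hg : Measurable g) (hf_nonneg : 0 ≤ f) (hg_nonneg : 0 ≤ g)
    (hf_cont : ContinuousOn f (Set.Ioi 0)) (hg_cont : ContinuousOn g (Set.Ioi 0)) {c : ℝ}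
    (hc : 0 < c)
    (h : volume.withDensity (fun v ↦ ENNReal.ofReal (g v)) =
      (volume.withDensity fun v ↦ ENNReal.ofReal (f v)).map (c * ·)) {v : ℝ} (hv : 0 < v) :
    g v = c⁻¹ * f (c⁻¹ * v) := by
  have hc' : 0 < c⁻¹ := inv_pos.2 hc
  have hscaled : ContinuousOn (fun v ↦ c⁻¹ * f (c⁻¹ * v)) (Set.Ioi 0) :=
    continuousOn_const.mul (hf_cont.comp (by fun_prop) fun _ hx ↦ mul_pos hc' hx)
  have hscale : volume.withDensity (fun v ↦ ENNReal.ofReal (g v)) =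
      volume.withDensity fun v ↦ ENNReal.ofReal (c⁻¹ * f (c⁻¹ * v)) := by
    simp only [h, map_mul_left_withDensity hf.ennreal_ofReal hc.ne', abs_of_pos hc',
      ENNReal.ofReal_mul hc'.le]
  have heq := eqOn_of_withDensity_eq (by fun_prop) (by fun_prop) hscale isOpen_Ioi
    (ENNReal.continuous_ofReal.comp_continuousOn hg_cont)
    (ENNReal.continuous_ofReal.comp_continuousOn hscaled) hv
  exact (ENNReal.ofReal_eq_ofReal_iff (hg_nonneg v) (mul_nonneg hc'.le (hf_nonneg _))).1 heq

theorem isTiltDilation_of_withDensity_eq_map_mul_left {f a Z : ℝ → ℝ} (hf : Measurable f)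
    (hf_nonneg : 0 ≤ f) (hf_cont : ContinuousOn f (Set.Ioi 0)) (ha : ∀ t, 0 < t → 0 < a t)
    (hZ : ∀ t, 0 < t → 0 ≤ Z t)
    (htilt : ∀ t, 0 < t →
      volume.withDensity (fun v ↦ ENNReal.ofReal (exp (-t * v) * f v / Z t)) =
        (volume.withDensity fun v ↦ ENNReal.ofReal (f v)).map (a t * ·)) :
    IsTiltDilation f fun t ↦ (a t)⁻¹ := by
  refine ⟨fun t ht ↦ inv_pos.2 (ha t ht), fun t ht ↦ ⟨a t / Z t, fun v hv ↦ ?_⟩⟩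
  have htilt_nonneg (v : ℝ) : 0 ≤ exp (-t * v) * f v / Z t :=
    div_nonneg (mul_nonneg (exp_pos _).le (hf_nonneg v)) (hZ t ht)
  have htilt_cont : ContinuousOn (fun v ↦ exp (-t * v) * f v / Z t) (Set.Ioi 0) :=
    ContinuousOn.div_const (by fun_prop) _
  have hdensity := eq_mul_comp_mul_of_withDensity_eq_map_mul_left hf (by fun_prop) hf_nonneg
    htilt_nonneg hf_cont htilt_cont (ha t ht) (htilt t ht) hv
  calc f ((a t)⁻¹ * v) = a t * (exp (-t * v) * f v / Z t) := by
        rw [hdensity, mul_inv_cancel_left₀ (ha t ht).ne']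
    _ = a t / Z t * (exp (-(t * v)) * f v) := by
        rw [neg_mul]
        ring

theorem integral_eq_one_of_isProbabilityMeasure_withDensity {X : Type*} [MeasurableSpace X]
    {μ : Measure X} {f : X → ℝ} (hf : AEStronglyMeasurable f μ) (hf_nonneg : 0 ≤ᵐ[μ] f)
    [hprob : IsProbabilityMeasure (μ.withDensity fun x ↦ ENNReal.ofReal (f x))] :
    ∫ x, f x ∂μ = 1 := by
  have hmass := hprob.measure_univ
  rw [withDensity_apply _ MeasurableSet.univ, setLIntegral_univ] at hmass
  rw [integral_eq_lintegral_of_nonneg_ae hf_nonneg hf, hmass, ENNReal.toReal_one]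

end Densities

theorem neg_one_lt_of_integrableOn_rpow_mul_exp {q b : ℝ}
    (h : IntegrableOn (fun v ↦ v ^ q * exp (-(b * v))) (Set.Ioi 0)) : -1 < q := by
  rw [← intervalIntegral.integrableOn_Ioo_rpow_iff one_pos]
  have hIoo : IntegrableOn _ (Set.Ioo (0 : ℝ) 1) := h.mono_set Set.Ioo_subset_Ioi_self
  have hexp : ContinuousOn (fun v ↦ exp (b * v)) (Set.Icc 0 1) := by fun_prop
  refine (hIoo.mul_continuousOn_of_subset hexp measurableSet_Ioo isCompact_Icc
    Set.Ioo_subset_Icc_self).congr_fun (fun v _ ↦ ?_) measurableSet_Ioo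
  simp only [mul_assoc, ← exp_add, neg_add_cancel, exp_zero, mul_one]

theorem neg_one_lt_and_eq_div_Gamma_of_integral_eq_one {C q b : ℝ} (hb : 0 < b)
    (h : ∫ v in Set.Ioi 0, C * (v ^ q * exp (-(b * v))) = 1) :
    -1 < q ∧ C = b ^ (q + 1) / Real.Gamma (q + 1) := by
  rw [integral_const_mul] at h
  have hq : -1 < q := neg_one_lt_of_integrableOn_rpow_mul_exp
    (.of_integral_ne_zero (right_ne_zero_of_mul_eq_one h))
  have hp : 0 < q + 1 := neg_lt_iff_pos_add.1 hq
  have hint := integral_rpow_mul_exp_neg_mul_Ioi hp hb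
  rw [add_sub_cancel_right, one_div, inv_rpow hb.le] at hint
  rw [hint] at h
  refine ⟨hq, ?_⟩
  have hGamma := (Gamma_pos_of_pos hp).ne'
  have hbq := (rpow_pos_of_pos hb (q + 1)).ne'
  field_simp at h ⊢
  exact h

/-- Marshall–Olkin 18.B.6: if a positive random variable `V` with continuous density `f`
is such that every exponential tilt of `V` is equal in distribution to a scale multiple
of `V`, then `V` has a Gamma distribution. -/
theorem tilt_scale_closed_implies_gamma
    (f : ℝ → ℝ) (hf_cont : ContinuousOn f (Set.Ioi 0))
    (hf_nonneg : ∀ v, 0 ≤ f v) (hf_zero : ∀ v ≤ (0:ℝ), f v = 0)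
    (hf_prob : IsProbabilityMeasure (volume.withDensity (fun v => ENNReal.ofReal (f v))))
    (a : ℝ → ℝ) (ha : ∀ t, 0 < t → 0 < a t)
    (htilt : ∀ t, 0 < t →
      (volume.withDensity (fun v => ENNReal.ofReal
          (Real.exp (-t * v) * f v / ∫ v', Real.exp (-t * v') * f v'))) =
        Measure.map (fun v => a t * v)
          (volume.withDensity (fun v => ENNReal.ofReal (f v)))) :
    ∃ p b : ℝ, 0 < p ∧ 0 < b ∧ ∀ v : ℝ, 0 < v →
      f v = b ^ p / Real.Gamma p * v ^ (p - 1) * Real.exp (-(b * v)) := by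
  have hf_compl (v : ℝ) (hv : v ∉ Set.Ioi 0) : f v = 0 := hf_zero v (not_lt.1 hv)
  have hf_meas := measurable_of_continuousOn_of_eq_zero measurableSet_Ioi hf_cont hf_compl
  have hf_one : ∫ v in Set.Ioi 0, f v = 1 := by
    rw [setIntegral_eq_integral_of_forall_compl_eq_zero hf_compl]
    exact integral_eq_one_of_isProbabilityMeasure_withDensity hf_meas.aestronglyMeasurable
      (.of_forall hf_nonneg)
  have hdil := isTiltDilation_of_withDensity_eq_map_mul_left hf_meas hf_nonneg hf_cont ha
    (fun t _ ↦ integral_nonneg fun v ↦ mul_nonneg (exp_pos (-t * v)).le (hf_nonneg v)) htilt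
  obtain ⟨C, q, b, hb, hform⟩ := hdil.exists_eq_mul_rpow_mul_exp hf_cont
  rw [setIntegral_congr_fun measurableSet_Ioi hform] at hf_one
  obtain ⟨hq, rfl⟩ := neg_one_lt_and_eq_div_Gamma_of_integral_eq_one hb hf_one
  refine ⟨q + 1, b, neg_lt_iff_pos_add.1 hq, hb, fun v hv ↦ ?_⟩
  rw [hform v hv, add_sub_cancel_right, mul_assoc]
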